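/- The Lyapunov exponent is strictly increasing in the parameter: for all real numbers 0 < α < β, one has λ_α < λ_β. -/

import Mathlib

/-!
The maps `T a x = 1 - 1 / (1 + x + a)` are increasing both in `x ≥ 0` and in `a ≥ 0`. Driving the
random continued fractions for `α < β` by the same coin flips (the binary digits of the same `t`)
therefore gives the pointwise coupling `0 ≤ Y α t ≤ Y β t ≤ 1` (`Y_mono`, `Y_mem`). Since
`log ((1 + s) * (1 + s + a))` is nondecreasing in `s ≥ 0` and strictly increasing in `a`, the two
integrands, pulled back to `[0, 1)`, are strictly ordered at every `t`; both are bounded and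
measurable, so their integrals are strictly ordered as well.
-/

open MeasureTheory Filter Set ENNReal

noncomputable def T (a x : ℝ) : ℝ := (x + a) / (1 + x + a)

noncomputable def M (a : ℝ) : ℝ := (-a + Real.sqrt (a ^ 2 + 4 * a)) / 2

/-- `comp x n s = T_{x 1} ∘ T_{x 2} ∘ ⋯ ∘ T_{x n} (s)`. -/
noncomputable def comp (x : ℕ → ℝ) : ℕ → ℝ → ℝ
  | 0, s => s
  | n + 1, s => comp x n (T (x (n + 1)) s)

/-- An i.i.d. sequence of fair-coin random variables taking values `0` and `α`, realized on
the probability space `[0,1)` with Lebesgue measure via binary digits: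
`seq α t i = α` if the binary digit of `t` at position `i` is `1`, and `0` otherwise. -/
noncomputable def seq (α t : ℝ) (i : ℕ) : ℝ :=
  if Int.fract (2 ^ i * t) < 1 / 2 then 0 else α

/-- The (a.s. defined) limit `Y = lim_n T_{X 1} ∘ ⋯ ∘ T_{X n} (0)`; since the sequence is
nondecreasing and bounded, the limit equals the supremum. -/
noncomputable def Y (α t : ℝ) : ℝ := ⨆ n, comp (seq α t) n 0

/-- `mu α` is the law of the random continued fraction `Y`. -/
noncomputable def mu (α : ℝ) : Measure ℝ :=
  Measure.map (Y α) (volume.restrict (Set.Ico (0 : ℝ) 1))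

/-- The Lyapunov exponent `λ_α`. -/
noncomputable def lam (α : ℝ) : ℝ :=
  (1 / 2) * ∫ s, Real.log ((1 + s) * (1 + s + α)) ∂(mu α)

lemma T_nonneg {a x : ℝ} (ha : 0 ≤ a) (hx : 0 ≤ x) : 0 ≤ T a x := by
  unfold T; positivity

lemma T_le_one {a x : ℝ} (ha : 0 ≤ a) (hx : 0 ≤ x) : T a x ≤ 1 := by
  unfold T
  rw [div_le_one (by positivity)]
  linarith

lemma T_mono {a b x y : ℝ} (ha : 0 ≤ a) (hab : a ≤ b) (hx : 0 ≤ x) (hxy : x ≤ y) :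
    T a x ≤ T b y := by
  unfold T
  rw [div_le_div_iff₀ (by linarith) (by linarith)]
  nlinarith

lemma comp_mem {x : ℕ → ℝ} (hx : ∀ i, 0 ≤ x i) (n : ℕ) {s : ℝ} (hs : s ∈ Icc (0 : ℝ) 1) :
    comp x n s ∈ Icc (0 : ℝ) 1 := by
  induction n generalizing s with
  | zero => exact hs
  | succ n ih => exact ih ⟨T_nonneg (hx _) hs.1, T_le_one (hx _) hs.1⟩

lemma comp_mono {x y : ℕ → ℝ} (hx : ∀ i, 0 ≤ x i) (hxy : ∀ i, x i ≤ y i) (n : ℕ) {s r : ℝ}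
    (hs : 0 ≤ s) (hsr : s ≤ r) : comp x n s ≤ comp y n r := by
  induction n generalizing s r with
  | zero => exact hsr
  | succ n ih => exact ih (T_nonneg (hx _) hs) (T_mono (hx _) (hxy _) hs hsr)

lemma seq_nonneg {α : ℝ} (hα : 0 ≤ α) (t : ℝ) (i : ℕ) : 0 ≤ seq α t i := by
  unfold _root_.seq; split_ifs <;> simp [hα]

lemma seq_mono {α β : ℝ} (h : α ≤ β) (t : ℝ) (i : ℕ) : seq α t i ≤ seq β t i := by
  unfold _root_.seq; split_ifs <;> simp [h]

/-- Boundedness of the approximants, without which the supremum defining `Y` would be a junk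
value. -/
lemma bddAbove_comp {α : ℝ} (hα : 0 ≤ α) (t : ℝ) :
    BddAbove (range fun n => comp (seq α t) n 0) := by
  refine ⟨1, ?_⟩
  rintro _ ⟨n, rfl⟩
  exact (comp_mem (seq_nonneg hα t) n (by simp)).2

lemma Y_mem {α : ℝ} (hα : 0 ≤ α) (t : ℝ) : Y α t ∈ Icc (0 : ℝ) 1 :=
  ⟨le_ciSup (bddAbove_comp hα t) 0,
    ciSup_le fun n => (comp_mem (seq_nonneg hα t) n (by simp)).2⟩

/-- The monotone coupling: the same coin flips give a larger continued fraction for a larger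
parameter. -/
lemma Y_mono {α β : ℝ} (hα : 0 ≤ α) (h : α ≤ β) (t : ℝ) : Y α t ≤ Y β t :=
  ciSup_mono (bddAbove_comp (hα.trans h) t) fun n =>
    comp_mono (seq_nonneg hα t) (seq_mono h t) n le_rfl le_rfl

lemma measurable_seq (α : ℝ) (i : ℕ) : Measurable fun t => seq α t i := by
  unfold _root_.seq
  refine Measurable.ite (measurableSet_lt ?_ measurable_const) measurable_const measurable_const
  exact measurable_fract.comp (measurable_const.mul measurable_id)

lemma measurable_comp_seq (α : ℝ) (n : ℕ) {f : ℝ → ℝ} (hf : Measurable f) :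
    Measurable fun t => comp (seq α t) n (f t) := by
  induction n generalizing f with
  | zero => exact hf
  | succ n ih =>
    have hs := measurable_seq α (n + 1)
    exact ih (f := fun t => T (seq α t (n + 1)) (f t))
      ((hf.add hs).div ((measurable_const.add hf).add hs))

lemma measurable_Y (α : ℝ) : Measurable (Y α) :=
  Measurable.iSup fun n => measurable_comp_seq α n measurable_const

lemma measurable_logY (α : ℝ) :
    Measurable fun t => Real.log ((1 + Y α t) * (1 + Y α t + α)) := by
  have := measurable_Y α
  fun_prop

lemma lam_eq (α : ℝ) :
    lam α = (1 / 2) * ∫ t in Ico (0 : ℝ) 1, Real.log ((1 + Y α t) * (1 + Y α t + α)) := by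
  unfold lam mu
  rw [integral_map (measurable_Y α).aemeasurable]
  exact Measurable.aestronglyMeasurable (by fun_prop)

lemma integrable_logY {α : ℝ} (hα : 0 ≤ α) :
    IntegrableOn (fun t => Real.log ((1 + Y α t) * (1 + Y α t + α))) (Ico (0 : ℝ) 1) := by
  refine Integrable.of_bound (measurable_logY α).aestronglyMeasurable
    (Real.log (2 * (2 + α))) (ae_of_all _ fun t => ?_)
  obtain ⟨h0, h1⟩ := Y_mem hα t
  have h : 1 ≤ (1 + Y α t) * (1 + Y α t + α) := by nlinarith
  rw [Real.norm_of_nonneg (Real.log_nonneg h)]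
  exact Real.log_le_log (by linarith) (by gcongr <;> linarith)

lemma logY_lt {α β : ℝ} (hα : 0 ≤ α) (h : α < β) (t : ℝ) :
    Real.log ((1 + Y α t) * (1 + Y α t + α)) < Real.log ((1 + Y β t) * (1 + Y β t + β)) := by
  have h0 := (Y_mem hα t).1
  have h1 := Y_mono hα h.le t
  apply Real.log_lt_log (by positivity)
  apply mul_lt_mul' <;> linarith

theorem lyapunov_strict_mono (α β : ℝ) (hα : 0 < α) (hαβ : α < β) : lam α < lam β := by
  rw [lam_eq, lam_eq]
  have hi := (integrable_logY (hα.trans hαβ).le).sub (integrable_logY hα.le)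
  have hpos : 0 < ∫ t in Ico (0 : ℝ) 1, (Real.log ((1 + Y β t) * (1 + Y β t + β))
      - Real.log ((1 + Y α t) * (1 + Y α t + α))) := by
    refine (integral_pos_iff_support_of_nonneg
      (fun t => (sub_pos.2 (logY_lt hα.le hαβ t)).le) hi).2 ?_
    -- The difference never vanishes, so its support is everything, of mass `1`.
    rw [Function.support_eq_univ fun t => (sub_pos.2 (logY_lt hα.le hαβ t)).ne']
    simp
  rw [integral_sub (integrable_logY (hα.trans hαβ).le) (integrable_logY hα.le)] at hpos
  linarith
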